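/- arXiv:1312.4928 — 3 statements merged into one kernel-verified Lean document; each statement's English description precedes it below -/
import Mathlib

section
/- For any integer a with 1 ≤ a ≤ q and any d ≥ 0, the power sum S_d(a) = Σ_{a monic of degree d} 1/a^s equals 1/ℓ_d^a, where ℓ_d = ∏_{i=1}^d (t - t^{q^i}). -/
/-!
Let `e_d(z) = ∏ (z + b)`, the product over all `b ∈ F[t]` of degree `< d`. This polynomial is
`F`-linear and satisfies `e_{d+1}(z) = e_d(z)^q - D_d^(q-1) e_d(z)` with `D_d = e_d(t^d)`, because
`∏_{λ ∈ F} (x + λ y) = x^q - y^(q-1) x` (`prod_add_sum_smul`). Only powers `z^(q^i)` occur in it, so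
`e_d(z) = l_d z + O(z^q)` with constant derivative `l_d`. Substituting `z = t^d - X` gives, over the
monic `a` of degree `d`,

  `∏ (a - X) = D_d - e_d(X)`,

and taking logarithmic derivatives

  `∑ 1 / (a - X) = l_d / (D_d - e_d(X)) = l_d / (D_d - l_d X) + O(X^q)`.

The coefficient of `X^k` on the left is `S_d(k + 1)`, hence `S_d(k + 1) = (l_d / D_d)^(k + 1)` for
`k < q` (`sum_inv_pow`).

It remains to see `D_d = l_d ℓ_d`. Since `l_{d+1} = -D_d^(q-1) l_d`, this amounts to
`D_{d+1} = (t^(q^(d+1)) - t) D_d^q`, which is the value at `z = t^d` of the Carlitz identity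
`e_{d+1}(t z) = t e_{d+1}(z) + (t^(q^(d+1)) - t) e_d(z)^q` (`carlitzE_succ_mul`).

The maps `e_d` are defined below by the recursion, over an arbitrary commutative `F`-algebra, so
that they can be used both over the field and over the power series ring in `X`.
-/

open Polynomial Finset

noncomputable section

variable (F : Type) [Field F] [Fintype F]

/-- The element `t = 1/u` in `F((u))`, so that `F[t]` embeds in `F((1/t)) = F((u))`. -/
def tL : LaurentSeries F := (HahnSeries.single (-1) 1 : LaurentSeries F)

/-- The monic polynomial of degree `d` with lower-order coefficients `c`,
evaluated at `t` inside `F((1/t))`. -/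
def mpoly (d : ℕ) (c : Fin d → F) : LaurentSeries F :=
  Polynomial.aeval (tL F) (X ^ d + ∑ i : Fin d, C (c i) * X ^ (i : ℕ))

/-- Power sum `S_d(s) = Σ_{a monic of degree d} 1/a^s`. -/
def S (d s : ℕ) : LaurentSeries F :=
  ∑ c : Fin d → F, ((mpoly F d c)⁻¹) ^ s

/-- Truncated power sum `S_{<d}(s) = Σ_{e < d} S_e(s)`. -/
def Slt (d s : ℕ) : LaurentSeries F := ∑ e ∈ Finset.range d, S F e s

/-- `ℓ_d = ∏_{i=1}^d (t - t^{q^i})`. -/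
def ell (d : ℕ) : LaurentSeries F :=
  ∏ i ∈ Finset.range d, (tL F - tL F ^ (Fintype.card F) ^ (i + 1))

/-- `[m] = t^{q^m} - t`. -/
def br (m : ℕ) : LaurentSeries F := tL F ^ (Fintype.card F) ^ m - tL F

/-- Iterated power sums `S_d(s_1, ..., s_r)`. -/
def SIter : ℕ → List ℕ → LaurentSeries F
  | _, [] => 1
  | d, s :: rest => S F d s * ∑ e ∈ Finset.range d, SIter e rest

/-- Multizeta value `ζ(s_1, ..., s_r) = Σ_d S_d(s_1, ..., s_r)`. -/
def zetaM (l : List ℕ) : LaurentSeries F := ∑' d : ℕ, SIter F d l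

end

/-- The `F`-linear maps `e_d(z) = ∏ (z + b)`, over the polynomials `b` in `t` of degree `< d`, encoded
by the recursion `e_{d+1}(z) = e_d(z)^q - e_d(t^d)^(q-1) e_d(z)`. -/
def carlitzE (F : Type*) [Field F] [Fintype F] {R : Type*} [CommRing R] [Algebra F R] (t : R) :
    ℕ → R →ₗ[F] R
  | 0 => LinearMap.id
  | d + 1 => (FiniteField.frobeniusAlgHom F R).toLinearMap ∘ₗ carlitzE F t d -
      LinearMap.mulLeft F (carlitzE F t d (t ^ d) ^ (Fintype.card F - 1)) ∘ₗ carlitzE F t d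

/-! ### The Carlitz recursion -/

section CommRing

variable {F : Type*} [Field F] [Fintype F] {R : Type*} [CommRing R] [Algebra F R]

theorem carlitzE_zero (t z : R) : carlitzE F t 0 z = z := rfl

theorem carlitzE_succ (t z : R) (d : ℕ) :
    carlitzE F t (d + 1) z = carlitzE F t d z ^ Fintype.card F -
      carlitzE F t d (t ^ d) ^ (Fintype.card F - 1) * carlitzE F t d z := rfl

theorem carlitzE_succ_pow_self (t : R) (d : ℕ) : carlitzE F t (d + 1) (t ^ d) = 0 := by
  rw [carlitzE_succ, ← pow_succ, Nat.sub_add_cancel Fintype.card_pos, sub_self]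

variable (F) in
theorem sub_pow_card (x y : R) :
    (x - y) ^ Fintype.card F = x ^ Fintype.card F - y ^ Fintype.card F :=
  map_sub (FiniteField.frobeniusAlgHom F R) x y

/-- The Carlitz recursion at level `d` determines `e_{d+1}(t^{d+1})`; stated with the recursion as a
hypothesis since its inductive proof needs this value. -/
theorem carlitzE_succ_pow_of_mul {t : R} {d : ℕ}
    (h : ∀ z, carlitzE F t (d + 1) (t * z) = t * carlitzE F t (d + 1) z +
      (t ^ Fintype.card F ^ (d + 1) - t) * carlitzE F t d z ^ Fintype.card F) :
    carlitzE F t (d + 1) (t ^ (d + 1)) =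
      (t ^ Fintype.card F ^ (d + 1) - t) * carlitzE F t d (t ^ d) ^ Fintype.card F := by
  rw [pow_succ' t d, h, carlitzE_succ_pow_self, mul_zero, zero_add]

/-- The Carlitz recursion `e_{d+1}(t z) = t e_{d+1}(z) + (t^{q^{d+1}} - t) e_d(z)^q`. -/
theorem carlitzE_succ_mul (t z : R) (d : ℕ) :
    carlitzE F t (d + 1) (t * z) = t * carlitzE F t (d + 1) z +
      (t ^ Fintype.card F ^ (d + 1) - t) * carlitzE F t d z ^ Fintype.card F := by
  induction d generalizing z with
  | zero =>
    simp only [carlitzE_succ, carlitzE_zero, pow_zero, one_pow, zero_add, pow_one, mul_pow]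
    ring
  | succ d ih =>
    have hD := carlitzE_succ_pow_of_mul ih
    have hq : Fintype.card F - 1 + 1 = Fintype.card F := Nat.sub_add_cancel Fintype.card_pos
    have hfrob := map_add (FiniteField.frobeniusAlgHom F R) (t * carlitzE F t (d + 1) z)
      ((t ^ Fintype.card F ^ (d + 1) - t) * carlitzE F t d z ^ Fintype.card F)
    simp only [FiniteField.frobeniusAlgHom_apply] at hfrob
    -- `e_{d+1}(z)^q`, expanded and multiplied by `(t^{q^{d+1}} - t)^q`
    have key : (t ^ Fintype.card F ^ (d + 1) - t) ^ Fintype.card F *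
        carlitzE F t (d + 1) z ^ Fintype.card F =
        (t ^ Fintype.card F ^ (d + 1) - t) ^ Fintype.card F *
          (carlitzE F t d z ^ Fintype.card F) ^ Fintype.card F -
        carlitzE F t (d + 1) (t ^ (d + 1)) ^ (Fintype.card F - 1) *
          ((t ^ Fintype.card F ^ (d + 1) - t) * carlitzE F t d z ^ Fintype.card F) := by
      rw [hD, carlitzE_succ t z d, sub_pow_card F (carlitzE F t d z ^ Fintype.card F), mul_sub]
      congr 1
      generalize t ^ Fintype.card F ^ (d + 1) - t = b
      have hb : b ^ Fintype.card F = b ^ (Fintype.card F - 1) * b := by rw [← pow_succ, hq]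
      rw [mul_pow, mul_pow, hb, ← pow_mul, ← pow_mul, mul_comm (Fintype.card F - 1)]
      ring
    have hbr := sub_pow_card F (t ^ Fintype.card F ^ (d + 1)) t
    rw [← pow_mul, ← pow_succ] at hbr
    rw [carlitzE_succ t (t * z) (d + 1), ih, hfrob, carlitzE_succ t z (d + 1)]
    rw [mul_pow, mul_pow]
    rw [hbr] at key ⊢
    linear_combination -key

theorem carlitzE_succ_pow (t : R) (d : ℕ) :
    carlitzE F t (d + 1) (t ^ (d + 1)) =
      (t ^ Fintype.card F ^ (d + 1) - t) * carlitzE F t d (t ^ d) ^ Fintype.card F :=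
  carlitzE_succ_pow_of_mul fun z => carlitzE_succ_mul t z d

end CommRing

/-! ### The product formula for `e_d` -/

section Domain

variable {F : Type*} [Field F] [Fintype F]

theorem prod_add_smul_of_field {L : Type*} [Field L] [Algebra F L] (x y : L) :
    ∏ a : F, (x + a • y) = x ^ Fintype.card F - y ^ (Fintype.card F - 1) * x := by
  have hq1 : 1 < Fintype.card F := Fintype.one_lt_card
  rcases eq_or_ne y 0 with rfl | hy
  · simp [zero_pow (Nat.sub_ne_zero_of_lt hq1)]
  have hprod : ∏ a : F, (X - C a) = (X ^ Fintype.card F - X : F[X]) := by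
    have h := prod_multiset_X_sub_C_of_monic_of_roots_card_eq
      (p := (X ^ Fintype.card F - X : F[X]))
      (monic_X_pow_sub (by simpa using hq1)) (by
        rw [FiniteField.roots_X_pow_card_sub_X, FiniteField.X_pow_card_sub_X_natDegree_eq F hq1]
        rfl)
    rwa [FiniteField.roots_X_pow_card_sub_X] at h
  have h := congrArg (aeval (x / y)) hprod
  simp only [map_prod, map_sub, map_pow, aeval_X, aeval_C] at h
  calc ∏ a : F, (x + a • y) = ∏ a : F, (y * (x / y - algebraMap F L a)) := by
        rw [← Equiv.prod_comp (Equiv.neg F)]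
        refine Finset.prod_congr rfl fun a _ => ?_
        rw [Equiv.neg_apply, Algebra.smul_def, map_neg, mul_sub, mul_div_cancel₀ _ hy]
        ring
    _ = y ^ Fintype.card F * ((x / y) ^ Fintype.card F - x / y) := by
        rw [Finset.prod_mul_distrib, h, Finset.prod_const, Finset.card_univ]
    _ = _ := by
        rw [mul_sub, ← mul_pow, mul_div_cancel₀ _ hy]
        nth_rewrite 2 [← Nat.sub_add_cancel hq1.le]
        rw [pow_succ, mul_assoc, mul_div_cancel₀ _ hy]

variable {R : Type*} [CommRing R] [IsDomain R] [Algebra F R]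

theorem prod_add_smul (x y : R) :
    ∏ a : F, (x + a • y) = x ^ Fintype.card F - y ^ (Fintype.card F - 1) * x := by
  apply IsFractionRing.injective R (FractionRing R)
  have := prod_add_smul_of_field (F := F) (algebraMap R (FractionRing R) x)
    (algebraMap R (FractionRing R) y)
  simpa [map_prod, Algebra.smul_def, ← IsScalarTower.algebraMap_apply] using this

/-- `e_d(z)` is the product of `z + b` over all polynomials `b` in `t` of degree `< d`. -/
theorem prod_add_sum_smul (t : R) (d : ℕ) (z : R) :
    ∏ c : Fin d → F, (z + ∑ i : Fin d, c i • t ^ (i : ℕ)) = carlitzE F t d z := by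
  induction d generalizing z with
  | zero => simp [carlitzE_zero]
  | succ d ih =>
    rw [← Equiv.prod_comp (Fin.snocEquiv fun _ : Fin (d + 1) => F), Fintype.prod_prod_type]
    simp only [Fin.snocEquiv_apply, Fin.sum_univ_castSucc, Fin.snoc_castSucc, Fin.snoc_last,
      Fin.val_castSucc, Fin.val_last]
    calc _ = ∏ a : F, (carlitzE F t d z + a • carlitzE F t d (t ^ d)) := by
          refine Finset.prod_congr rfl fun a _ => ?_
          rw [← map_smul, ← map_add, ← ih]
          refine Finset.prod_congr rfl fun c _ => ?_
          ring
      _ = _ := by rw [prod_add_smul, carlitzE_succ]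

end Domain

/-! ### Logarithmic derivative and power sums -/

section PowerSeries

open PowerSeries (derivative)

variable {F : Type*} [Field F] [Fintype F] {K : Type*} [Field K] [Algebra F K]

/-- The numbers `D_d = e_d(t^d) = ∏_{i<d} (t^{q^d} - t^{q^i})`, by their recursion. -/
def carlitzD (q : ℕ) (t : K) : ℕ → K
  | 0 => 1
  | d + 1 => (t ^ q ^ (d + 1) - t) * carlitzD q t d ^ q

/-- The linear coefficient of `e_d`. -/
def carlitzLin (q : ℕ) (t : K) : ℕ → K
  | 0 => 1
  | d + 1 => -(carlitzD q t d ^ (q - 1) * carlitzLin q t d)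

theorem carlitzD_ne_zero {q : ℕ} {t : K} (ht : ∀ i, t - t ^ q ^ (i + 1) ≠ 0) (d : ℕ) :
    carlitzD q t d ≠ 0 := by
  induction d with
  | zero => exact one_ne_zero
  | succ d ih =>
    refine mul_ne_zero ?_ (pow_ne_zero _ ih)
    rw [← neg_sub]
    exact neg_ne_zero.2 (ht d)

theorem carlitzLin_mul_prod {q : ℕ} (hq : q ≠ 0) (t : K) (d : ℕ) :
    carlitzLin q t d * ∏ i ∈ Finset.range d, (t - t ^ q ^ (i + 1)) = carlitzD q t d := by
  induction d with
  | zero => simp [carlitzLin, carlitzD]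
  | succ d ih =>
    have h : carlitzD q t d ^ q = carlitzD q t d ^ (q - 1) * carlitzD q t d := by
      rw [← pow_succ, Nat.sub_add_cancel (Nat.pos_of_ne_zero hq)]
    rw [Finset.prod_range_succ, carlitzLin, carlitzD, h]
    linear_combination (carlitzD q t d ^ (q - 1) * (t ^ q ^ (d + 1) - t)) * ih

theorem carlitzE_C_pow (t : K) (d : ℕ) :
    carlitzE F (PowerSeries.C t) d (PowerSeries.C t ^ d) =
      PowerSeries.C (carlitzD (Fintype.card F) t d) := by
  induction d with
  | zero => simp [carlitzE_zero, carlitzD]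
  | succ d ih => rw [carlitzE_succ_pow, ih, carlitzD]; simp

/-- `e_d(X) ≡ l_d X` modulo `X^q`. -/
theorem exists_carlitzE_X (t : K) (d : ℕ) : ∃ g : PowerSeries K,
    carlitzE F (PowerSeries.C t) d PowerSeries.X =
      PowerSeries.C (carlitzLin (Fintype.card F) t d) * PowerSeries.X +
        PowerSeries.X ^ Fintype.card F * g := by
  induction d with
  | zero => exact ⟨0, by simp [carlitzE_zero, carlitzLin]⟩
  | succ d ih =>
    obtain ⟨g, hg⟩ := ih
    have hq : Fintype.card F = Fintype.card F - 1 + 1 :=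
      (Nat.sub_add_cancel Fintype.card_pos).symm
    have hX : carlitzE F (PowerSeries.C t) d PowerSeries.X = PowerSeries.X *
        (PowerSeries.C (carlitzLin (Fintype.card F) t d) +
          PowerSeries.X ^ (Fintype.card F - 1) * g) := by
      rw [hg]
      nth_rewrite 2 [hq]
      ring
    refine ⟨(PowerSeries.C (carlitzLin (Fintype.card F) t d) +
      PowerSeries.X ^ (Fintype.card F - 1) * g) ^ Fintype.card F -
        PowerSeries.C (carlitzD (Fintype.card F) t d ^ (Fintype.card F - 1)) * g, ?_⟩
    rw [carlitzE_succ, carlitzE_C_pow]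
    nth_rewrite 1 [hX]
    rw [hg, mul_pow, carlitzLin]
    simp only [map_neg, map_mul, map_pow]
    ring

theorem C_sub_X_mul_mk {a : K} (ha : a ≠ 0) :
    (PowerSeries.C a - PowerSeries.X) * PowerSeries.mk (fun k => a⁻¹ ^ (k + 1)) = 1 := by
  ext n
  cases n with
  | zero => simp [sub_mul, ha]
  | succ n =>
    simp only [sub_mul, map_sub, PowerSeries.coeff_C_mul, PowerSeries.coeff_succ_X_mul,
      PowerSeries.coeff_mk, PowerSeries.coeff_one]
    rw [pow_succ' _ (n + 1), mul_inv_cancel_left₀ ha]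
    simp

/-- Minus the logarithmic derivative of a product is the sum of the `v i`, each being minus the
logarithmic derivative of `f i`. -/
theorem prod_mul_sum_eq_neg_derivative {ι : Type*} (s : Finset ι) (f v : ι → PowerSeries K)
    (h : ∀ i ∈ s, f i * v i = -derivative K (f i)) :
    (∏ i ∈ s, f i) * ∑ i ∈ s, v i = -derivative K (∏ i ∈ s, f i) := by
  classical
  induction s using Finset.induction_on with
  | empty => simp
  | insert i s hi ih =>
    have h1 := h i (Finset.mem_insert_self i s)
    have h2 := ih fun j hj => h j (Finset.mem_insert_of_mem hj)
    rw [Finset.prod_insert hi, Finset.sum_insert hi, Derivation.leibniz, smul_eq_mul, smul_eq_mul]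
    linear_combination (∏ i ∈ s, f i) * h1 + f i * h2

/-- The power sum formula over any field extension of `F`, for `t` with `t ≠ t^(q^i)` for all `i ≥ 1`;
this condition ensures `D_d ≠ 0`, and thereby that no monic `a` of degree `d` vanishes at `t`. -/
theorem sum_inv_pow {t : K} (ht : ∀ i, t - t ^ Fintype.card F ^ (i + 1) ≠ 0) (d a : ℕ)
    (ha1 : 1 ≤ a) (ha2 : a ≤ Fintype.card F) :
    ∑ c : Fin d → F, ((t ^ d + ∑ i : Fin d, c i • t ^ (i : ℕ))⁻¹) ^ a =
      (∏ i ∈ Finset.range d, (t - t ^ Fintype.card F ^ (i + 1)))⁻¹ ^ a := by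
  obtain ⟨g, hg⟩ := exists_carlitzE_X (F := F) t d
  have hq : Fintype.card F ≠ 0 := Fintype.card_ne_zero
  have hlin := carlitzLin_mul_prod hq t d
  have hD0 := carlitzD_ne_zero ht d
  set q := Fintype.card F with hq_def
  set D := carlitzD q t d
  set l := carlitzLin q t d
  set m : (Fin d → F) → K := fun c => t ^ d + ∑ i : Fin d, c i • t ^ (i : ℕ) with hm
  -- `∏ (a - X) = e_d(t^d - X) = D_d - e_d(X)`, over the monic `a` of degree `d`
  have hP : ∏ c, (PowerSeries.C (m c) - PowerSeries.X) =
      PowerSeries.C D - (PowerSeries.C l * PowerSeries.X + PowerSeries.X ^ q * g) := by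
    rw [← hg, ← carlitzE_C_pow, ← map_sub, ← prod_add_sum_smul]
    refine Finset.prod_congr rfl fun c _ => ?_
    simp only [hm, map_add, map_pow, map_sum, Algebra.smul_def, map_mul]
    simp only [PowerSeries.algebraMap_apply]
    ring
  have hm0 : ∀ c, m c ≠ 0 := by
    have h := congrArg PowerSeries.constantCoeff hP
    simp only [map_prod, map_sub, map_add, map_mul, map_pow, PowerSeries.constantCoeff_C,
      PowerSeries.constantCoeff_X, sub_zero, mul_zero, zero_pow hq, zero_mul, add_zero] at h
    rw [← h, Finset.prod_ne_zero_iff] at hD0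
    exact fun c => hD0 c (Finset.mem_univ c)
  have hlog := prod_mul_sum_eq_neg_derivative Finset.univ
    (fun c => PowerSeries.C (m c) - PowerSeries.X)
    (fun c => PowerSeries.mk fun k => (m c)⁻¹ ^ (k + 1))
    (fun c _ => by rw [C_sub_X_mul_mk (hm0 c)]; simp)
  rw [hP] at hlog
  set u : PowerSeries K := ∑ c, PowerSeries.mk fun k => (m c)⁻¹ ^ (k + 1) with hu
  have hcoeff : ∀ k, PowerSeries.coeff k u = ∑ c, (m c)⁻¹ ^ (k + 1) := by
    intro k
    simp [hu, map_sum]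
  -- the derivative of `X^q` vanishes, so that `e_d(X)` has derivative `l` modulo `X^q`
  have hqK : (q : PowerSeries K) = 0 := by
    have := congrArg (algebraMap F (PowerSeries K)) (FiniteField.cast_card_eq_zero F)
    rwa [map_natCast, map_zero] at this
  have hder : -derivative K (PowerSeries.C D -
      (PowerSeries.C l * PowerSeries.X + PowerSeries.X ^ q * g)) =
      PowerSeries.C l + PowerSeries.X ^ q * derivative K g := by
    simp [Derivation.leibniz, hqK]
  rw [hder] at hlog
  have hrec : PowerSeries.C D * u =
      PowerSeries.C l + PowerSeries.X * (PowerSeries.C l * u) +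
        PowerSeries.X ^ q * (derivative K g + g * u) := by
    linear_combination hlog
  have hmain : ∀ k, k < q → ∑ c, (m c)⁻¹ ^ (k + 1) = (l / D) ^ (k + 1) := by
    intro k
    induction k with
    | zero =>
      intro hk
      have h := congrArg (PowerSeries.coeff 0) hrec
      rw [PowerSeries.coeff_C_mul, hcoeff, map_add, map_add, PowerSeries.coeff_X_pow_mul',
        if_neg (by omega)] at h
      simp at h
      simp only [zero_add, pow_one]
      rw [eq_div_iff hD0, ← h, mul_comm]
    | succ k ih =>
      intro hk
      have h := congrArg (PowerSeries.coeff (k + 1)) hrec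
      rw [PowerSeries.coeff_C_mul, hcoeff, map_add, map_add, PowerSeries.coeff_X_pow_mul',
        if_neg (by omega), PowerSeries.coeff_succ_X_mul, PowerSeries.coeff_C_mul, hcoeff,
        ih (by omega), PowerSeries.coeff_C, if_neg (by omega), zero_add, add_zero] at h
      rw [pow_succ' (l / D) (k + 1), div_mul_eq_mul_div, eq_div_iff hD0, ← h, mul_comm]
  have hlD : l / D = (∏ i ∈ Finset.range d, (t - t ^ q ^ (i + 1)))⁻¹ := by
    have hl0 : l ≠ 0 := by
      rintro h0
      rw [h0, zero_mul] at hlin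
      exact hD0 hlin.symm
    rw [← hlin, div_mul_cancel_left₀ hl0]
  obtain ⟨k, rfl⟩ := Nat.exists_eq_add_of_le' ha1
  rw [hmain k (by omega), hlD]

end PowerSeries

theorem tL_sub_pow_ne_zero (F : Type) [Field F] [Fintype F] (i : ℕ) :
    tL F - tL F ^ Fintype.card F ^ (i + 1) ≠ 0 := by
  rw [sub_ne_zero]
  intro h
  have h1 : 1 < Fintype.card F ^ (i + 1) := Nat.one_lt_pow (by omega) Fintype.one_lt_card
  have h2 := congrArg HahnSeries.order h
  rw [HahnSeries.order_pow, tL, HahnSeries.order_single one_ne_zero, nsmul_eq_mul] at h2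
  have h3 : ((Fintype.card F ^ (i + 1) : ℕ) : ℤ) = 1 := by linarith
  have h4 : Fintype.card F ^ (i + 1) = 1 := by exact_mod_cast h3
  omega

/-- For 1 ≤ a ≤ q, S_d(a) = 1/ℓ_d^a. -/
theorem Sd_small (F : Type) [Field F] [Fintype F] (q : ℕ) (hq : q = Fintype.card F)
    (d a : ℕ) (ha1 : 1 ≤ a) (ha2 : a ≤ q) :
    S F d a = (ell F d)⁻¹ ^ a := by
  subst hq
  rw [ell, ← sum_inv_pow (F := F) (tL_sub_pow_ne_zero F) d a ha1 ha2, S]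
  simp [mpoly, Algebra.smul_def]
end

section
/- For integers j ≥ 1 and d ≥ 1, the truncated power sum S_{<d}(q^j - 1) := Σ_{e=0}^{d-1} S_e(q^j - 1) equals ℓ_{d+j-1} / (ℓ_j · ℓ_{d-1}^{q^j}). -/
/-!
The proof is Lagrange interpolation at Frobenius twists of `t`. Put `q = #F`, `Q = q ^ j`, and
let `V` be the `F`-span of `1, t, …, t ^ (d - 1)`. A polynomial `p` over `F` of degree `< d`
satisfies `p(t) ^ (q ^ n) = p(t ^ (q ^ n))`, so interpolating `p` at the nodes `t ^ (q ^ (i + j))`,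
`i < d`, and evaluating at `t` gives, for `v = p(t)`,
`v = ∑ i < d, L i * v ^ (q ^ (i + j))`, where `L i` is the value at `t` of the `i`-th Lagrange
basis polynomial. Dividing by `v ^ Q` when `v ≠ 0`,
`v ^ (1 - Q) = ∑ i < d, L i * (v ^ (q ^ i - 1)) ^ Q`.

Sum this over `v ∈ V`. The power sums `∑ v ^ (q ^ i - 1)`, `i < d`, vanish: as a function of the
`d` coefficients of `v`, the summand is a polynomial of degree at most `i * (q - 1) < d * (q - 1)`,
so the argument of Chevalley and Warning applies (`sum_lin_pow`). Only the correction at `v = 0`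
survives, and the sum over `V \ {0}` of `v ^ (1 - Q)` is `-L 0` (`sum_inv_pow_eq`).
Grouping the nonzero `v` by their leading coefficient, and using that `v ^ (1 - Q)` is invariant
under `Fˣ`, the same sum is `(q - 1) * S_{<d}(Q - 1) = -S_{<d}(Q - 1)` (`sum_inv_pow_eq_neg_Slt`).
Hence `S_{<d}(Q - 1) = L 0 = ∏ (t - t ^ (q ^ (i + j))) / (t ^ Q - t ^ (q ^ (i + j)))`, the product
over `0 < i < d`, which is the asserted quotient of the `ℓ`'s.
-/

open Polynomial Finset

/-- The evaluation at `t` of the polynomial of degree `< d` with coefficient vector `c`. -/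
noncomputable def lin {F K : Type*} [Field F] [Field K] [Algebra F K] (t : K) {d : ℕ} (c : Fin d → F) : K :=
  ∑ i : Fin d, c i • t ^ (i : ℕ)

section General

variable {F K : Type*} [Field F] [Fintype F] [Field K] [Algebra F K]

/-- The lemma behind the Chevalley–Warning theorem, for polynomials whose coefficients lie in an
extension `K` of the finite field `F` over which the variables range. -/
lemma sum_eval_algebraMap_eq_zero {d : ℕ} (f : MvPolynomial (Fin d) K)
    (h : f.totalDegree < (Fintype.card F - 1) * d) :
    ∑ x : Fin d → F, MvPolynomial.eval (fun i => algebraMap F K (x i)) f = 0 := by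
  classical
  simp only [MvPolynomial.eval_eq']
  rw [Finset.sum_comm]
  refine Finset.sum_eq_zero fun n hn => ?_
  obtain ⟨i, hi⟩ := f.exists_degree_lt (Fintype.card F - 1) (by simpa using h) hn
  rw [← Finset.mul_sum]
  have h1 : ∑ x : Fin d → F, ∏ k, algebraMap F K (x k) ^ n k
      = ∏ k, ∑ a : F, algebraMap F K a ^ n k := by
    rw [Finset.prod_univ_sum, Fintype.piFinset_univ]
  rw [h1, Finset.prod_eq_zero (Finset.mem_univ i), mul_zero]
  simp_rw [← map_pow, ← map_sum]
  rw [FiniteField.sum_pow_lt_card_sub_one F _ hi, map_zero]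

/-- The `q ^ n`-power map is `F`-linear. -/
lemma lin_pow (t : K) {d : ℕ} (c : Fin d → F) (n : ℕ) :
    lin t c ^ Fintype.card F ^ n = lin (t ^ Fintype.card F ^ n) c := by
  have h : ∀ x : K, (FiniteField.frobeniusAlgHom F K ^ n) x = x ^ Fintype.card F ^ n := by
    intro x
    rw [AlgHom.coe_pow, FiniteField.coe_frobeniusAlgHom, pow_iterate]
  rw [← h, lin, lin, map_sum]
  refine Finset.sum_congr rfl fun i _ => ?_
  rw [map_smul, h, ← pow_mul, ← pow_mul, mul_comm]

/-- Since `q ^ i - 1 = ∑ k < i, (q - 1) * q ^ k`, the power `x ^ (q ^ i - 1)` is a product of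
`i * (q - 1)` Frobenius twists of `x`. -/
lemma pow_sub_one_eq_prod (x : K) {q : ℕ} (hq : 1 ≤ q) (i : ℕ) :
    x ^ (q ^ i - 1) = ∏ k ∈ Finset.range i, (x ^ q ^ k) ^ (q - 1) := by
  induction i with
  | zero => simp
  | succ i ih =>
    rw [Finset.prod_range_succ, ← ih, ← pow_mul, ← pow_add]
    congr 1
    have : 1 ≤ q ^ i := Nat.one_le_pow _ _ hq
    obtain ⟨r, rfl⟩ := Nat.exists_eq_add_of_le hq
    rw [pow_succ, Nat.mul_add, Nat.add_sub_cancel_left]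
    omega

lemma sum_lin_pow (t : K) {d i : ℕ} (hi : i < d) :
    ∑ c : Fin d → F, lin t c ^ (Fintype.card F ^ i - 1) = 0 := by
  have hq : 1 < Fintype.card F := Fintype.one_lt_card
  let P : MvPolynomial (Fin d) K := ∏ k ∈ Finset.range i,
    (∑ m : Fin d, MvPolynomial.C ((t ^ Fintype.card F ^ k) ^ (m : ℕ)) * MvPolynomial.X m)
      ^ (Fintype.card F - 1)
  have hP : P.totalDegree < (Fintype.card F - 1) * d := by
    have h1 : P.totalDegree ≤ ∑ k ∈ Finset.range i, (Fintype.card F - 1) := by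
      refine (MvPolynomial.totalDegree_finsetProd _ _).trans (Finset.sum_le_sum fun k _ => ?_)
      refine (MvPolynomial.totalDegree_pow _ _).trans ?_
      refine (Nat.mul_le_mul_left _ (MvPolynomial.totalDegree_finsetSum_le (d := 1) ?_)).trans
        (Nat.mul_one _).le
      intro m _
      refine (MvPolynomial.totalDegree_mul _ _).trans ?_
      rw [MvPolynomial.totalDegree_C, MvPolynomial.totalDegree_X]
    rw [Finset.sum_const, Finset.card_range, smul_eq_mul, mul_comm] at h1
    exact h1.trans_lt (Nat.mul_lt_mul_of_pos_left hi (by omega))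
  rw [← sum_eval_algebraMap_eq_zero (F := F) P hP]
  refine Finset.sum_congr rfl fun c _ => ?_
  rw [pow_sub_one_eq_prod _ hq.le, map_prod]
  refine Finset.prod_congr rfl fun k _ => ?_
  rw [lin_pow, map_pow, map_sum, lin]
  congr 1
  refine Finset.sum_congr rfl fun m _ => ?_
  rw [map_mul, MvPolynomial.eval_C, MvPolynomial.eval_X, Algebra.smul_def, mul_comm]

/-- Lagrange interpolation at the nodes `t ^ (q ^ (i + j))`, `i < d`, evaluated at `t`. -/
lemma lin_eq_sum (t : K) (ht : Function.Injective fun n : ℕ => t ^ Fintype.card F ^ n)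
    (j : ℕ) {d : ℕ} (c : Fin d → F) :
    lin t c = ∑ i ∈ Finset.range d,
      (Lagrange.basis (Finset.range d) (fun i => t ^ Fintype.card F ^ (i + j)) i).eval t *
        lin t c ^ Fintype.card F ^ (i + j) := by
  let p : K[X] := ∑ i : Fin d, C (algebraMap F K (c i)) * X ^ (i : ℕ)
  have hp : ∀ x, p.eval x = lin x c := by
    intro x
    simp [p, lin, Polynomial.eval_finsetSum, Algebra.smul_def]
  have hdeg : p.degree < ((Finset.range d).card : ℕ) := by
    rw [Finset.card_range]
    exact Polynomial.degree_sum_fin_lt _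
  have hinj : Set.InjOn (fun i => t ^ Fintype.card F ^ (i + j)) (Finset.range d : Set ℕ) :=
    fun a _ b _ hab => Nat.add_right_cancel (ht hab)
  have h := congrArg (Polynomial.eval t) (Lagrange.eq_interpolate hinj hdeg)
  rw [hp, Lagrange.interpolate_apply, Polynomial.eval_finsetSum] at h
  refine h.trans (Finset.sum_congr rfl fun i _ => ?_)
  rw [Polynomial.eval_mul, Polynomial.eval_C, hp, lin_pow, mul_comm]

/-- The term `c = 0` of the sum is `0`, since `0⁻¹ = 0` and the exponent is positive. -/
lemma sum_inv_pow_eq (t : K) (ht : Function.Injective fun n : ℕ => t ^ Fintype.card F ^ n)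
    {d : ℕ} (hlin : ∀ c : Fin d → F, lin t c = 0 → c = 0) {j : ℕ} (hj : 1 ≤ j) (hd : 1 ≤ d) :
    ∑ c : Fin d → F, (lin t c)⁻¹ ^ (Fintype.card F ^ j - 1) =
      -(Lagrange.basis (Finset.range d) (fun i => t ^ Fintype.card F ^ (i + j)) 0).eval t := by
  classical
  have hq : 1 < Fintype.card F := Fintype.one_lt_card
  have hQ : 1 < Fintype.card F ^ j := Nat.one_lt_pow (by omega) hq
  set L : ℕ → K := fun i =>
    (Lagrange.basis (Finset.range d) (fun i => t ^ Fintype.card F ^ (i + j)) i).eval t with hL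
  have key : ∀ c : Fin d → F, (lin t c)⁻¹ ^ (Fintype.card F ^ j - 1) =
      ∑ i ∈ Finset.range d, L i * (lin t c ^ (Fintype.card F ^ i - 1)) ^ Fintype.card F ^ j
        - if c = 0 then L 0 else 0 := by
    intro c
    split_ifs with hc
    -- At `c = 0` the term `i = 0` equals `L 0`, because `0 ^ 0 = 1`; the others vanish.
    · have h0 : lin t c = 0 := by simp [lin, hc]
      rw [h0, inv_zero, zero_pow (by omega), Finset.sum_eq_single 0]
      · simp
      · intro i _ hi
        have : 1 < Fintype.card F ^ i := Nat.one_lt_pow hi hq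
        rw [zero_pow (by omega : Fintype.card F ^ i - 1 ≠ 0), zero_pow (by omega), mul_zero]
      · intro h
        exact absurd (Finset.mem_range.2 hd) h
    · have h0 : lin t c ≠ 0 := fun h => hc (hlin c h)
      rw [sub_zero, inv_pow]
      have hQ0 : lin t c ^ Fintype.card F ^ j ≠ 0 := pow_ne_zero _ h0
      apply mul_right_cancel₀ hQ0
      have e1 : (lin t c ^ (Fintype.card F ^ j - 1))⁻¹ * lin t c ^ Fintype.card F ^ j
          = lin t c := by
        conv_lhs => rw [← Nat.sub_add_cancel hQ.le, pow_succ, Nat.add_sub_cancel]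
        rw [inv_mul_cancel_left₀ (pow_ne_zero _ h0)]
      rw [e1, Finset.sum_mul]
      conv_lhs => rw [lin_eq_sum t ht j c]
      refine Finset.sum_congr rfl fun i _ => ?_
      have : 1 ≤ Fintype.card F ^ i := Nat.one_le_pow _ _ hq.le
      rw [mul_assoc, ← mul_pow, ← pow_succ, Nat.sub_add_cancel this, ← pow_mul, ← pow_add]
  simp_rw [key]
  rw [Finset.sum_sub_distrib, Finset.sum_comm, Finset.sum_ite_eq']
  rw [Finset.sum_eq_zero, zero_sub, if_pos (Finset.mem_univ _)]
  intro i hi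
  have h : ∀ x : K, (FiniteField.frobeniusAlgHom F K ^ j) x = x ^ Fintype.card F ^ j := by
    intro x
    rw [AlgHom.coe_pow, FiniteField.coe_frobeniusAlgHom, pow_iterate]
  simp_rw [← Finset.mul_sum, ← h, ← map_sum]
  rw [sum_lin_pow t (Finset.mem_range.1 hi), map_zero, mul_zero]

/-- One step of the grouping by leading coefficient: the vectors with nonzero `d`-th coefficient
contribute `q - 1 = -1` times the sum over monic polynomials of degree `d`. -/
lemma sum_inv_pow_succ (t : K) (d s : ℕ) (hs : ∀ a : F, a ≠ 0 → a ^ s = 1) :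
    ∑ c : Fin (d + 1) → F, (lin t c)⁻¹ ^ s =
      ∑ c : Fin d → F, (lin t c)⁻¹ ^ s - ∑ c : Fin d → F, (t ^ d + lin t c)⁻¹ ^ s := by
  classical
  rw [← (Fin.snocEquiv fun _ : Fin (d + 1) => F).sum_comp, Fintype.sum_prod_type]
  have hsn : ∀ (a : F) (c : Fin d → F),
      lin t ((Fin.snocEquiv fun _ : Fin (d + 1) => F) (a, c)) = a • t ^ d + lin t c := by
    intro a c
    simp [lin, Fin.sum_univ_castSucc, Fin.snocEquiv, add_comm]
  simp_rw [hsn]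
  have hne : ∀ a : F, a ≠ 0 → ∑ c : Fin d → F, (a • t ^ d + lin t c)⁻¹ ^ s
      = ∑ c : Fin d → F, (t ^ d + lin t c)⁻¹ ^ s := by
    intro a ha
    -- Rescale the lower coefficients by `a`, so that the factor `a ^ s = 1` comes out.
    rw [← (MulAction.bijective (β := Fin d → F) (Units.mk0 a ha)).sum_comp]
    refine Finset.sum_congr rfl fun c _ => ?_
    have : lin t (Units.mk0 a ha • c) = a • lin t c := by
      simp [lin, Finset.smul_sum, Units.smul_def, mul_smul]
    rw [this, ← smul_add, Algebra.smul_def, mul_inv, mul_pow, ← map_inv₀, ← map_pow, inv_pow,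
      hs a ha, inv_one, map_one, one_mul]
  rw [← Finset.add_sum_erase _ _ (Finset.mem_univ (0 : F)),
    Finset.sum_congr rfl fun a ha => hne a (Finset.ne_of_mem_erase ha), Finset.sum_const,
    Finset.card_erase_of_mem (Finset.mem_univ _), Finset.card_univ, nsmul_eq_mul,
    Nat.cast_sub Fintype.card_pos]
  have : ((Fintype.card F : ℕ) : K) = 0 := by
    rw [← map_natCast (algebraMap F K), Nat.cast_card_eq_zero, map_zero]
  rw [this]
  simp [sub_eq_add_neg]

/-- The value at `t` of the Lagrange basis polynomial of the node `t ^ (q ^ j)`. -/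
lemma eval_basis_zero (t : K) (q j m : ℕ) :
    (Lagrange.basis (Finset.range (m + 1)) (fun i => t ^ q ^ (i + j)) 0).eval t =
      (∏ i ∈ Finset.range m, (t - t ^ q ^ (i + 1 + j))) /
        ∏ i ∈ Finset.range m, (t ^ q ^ j - t ^ q ^ (i + 1 + j)) := by
  have he : (Finset.range (m + 1)).erase 0 = (Finset.range m).image (· + 1) := by
    ext i
    cases i <;> simp
  rw [Lagrange.basis, he, Finset.prod_image (by intro a _ b _ h; simpa using h),
    Polynomial.eval_prod, ← Finset.prod_div_distrib]
  refine Finset.prod_congr rfl fun i _ => ?_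
  simp [Lagrange.basisDivisor, div_eq_mul_inv, mul_comm]

end General

section Laurent

variable {F : Type} [Field F]

lemma tL_pow (n : ℕ) : tL F ^ n = HahnSeries.single (-(n : ℤ)) 1 := by
  rw [tL, HahnSeries.single_pow]
  simp

lemma tL_pow_injective : Function.Injective fun n : ℕ => tL F ^ n := by
  intro a b h
  by_contra hab
  have h1 := congrArg (fun x : LaurentSeries F => x.coeff (-(a : ℤ))) h
  simp only [tL_pow, HahnSeries.coeff_single_same] at h1
  rw [HahnSeries.coeff_single_of_ne (by omega)] at h1
  exact one_ne_zero h1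

lemma lin_tL (d : ℕ) (c : Fin d → F) :
    lin (tL F) c = ∑ i : Fin d, (HahnSeries.single (-((i : ℕ) : ℤ)) (c i) : LaurentSeries F) := by
  refine Finset.sum_congr rfl fun i _ => ?_
  have h : algebraMap F (LaurentSeries F) (c i) = HahnSeries.C (c i) := by
    simp [HahnSeries.algebraMap_apply']
  rw [Algebra.smul_def, h, tL_pow, HahnSeries.C_apply, HahnSeries.single_mul_single, zero_add,
    mul_one]

lemma lin_tL_eq_zero {d : ℕ} (c : Fin d → F) (h : lin (tL F) c = 0) : c = 0 := by
  funext i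
  have h1 := congrArg (fun x : LaurentSeries F => x.coeff (-((i : ℕ) : ℤ))) h
  simp only [lin_tL, HahnSeries.coeff_sum, HahnSeries.coeff_zero] at h1
  rw [Finset.sum_eq_single i] at h1
  · simpa using h1
  · intro b _ hb
    have : (b : ℕ) ≠ i := fun h => hb (Fin.ext h)
    rw [HahnSeries.coeff_single_of_ne (by omega)]
  · simp

lemma mpoly_eq (d : ℕ) (c : Fin d → F) : mpoly F d c = tL F ^ d + lin (tL F) c := by
  simp [mpoly, lin, Algebra.smul_def]

variable [Fintype F]

lemma tL_pow_card_injective : Function.Injective fun n : ℕ => tL F ^ Fintype.card F ^ n :=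
  fun _ _ h => Nat.pow_right_injective Fintype.one_lt_card (tL_pow_injective h)

lemma sum_inv_pow_eq_neg_Slt (d s : ℕ) (hs0 : s ≠ 0) (hs : ∀ a : F, a ≠ 0 → a ^ s = 1) :
    ∑ c : Fin d → F, (lin (tL F) c)⁻¹ ^ s = -Slt F d s := by
  induction d with
  | zero => simp [Slt, lin, hs0]
  | succ d ih =>
    rw [sum_inv_pow_succ _ _ _ hs, ih, Slt, Slt, Finset.sum_range_succ, S]
    simp_rw [mpoly_eq]
    ring

lemma ell_ne_zero (d : ℕ) : ell F d ≠ 0 := by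
  refine Finset.prod_ne_zero_iff.2 fun i _ h => ?_
  have h1 : tL F ^ Fintype.card F ^ 0 = tL F ^ Fintype.card F ^ (i + 1) := by
    simpa using sub_eq_zero.1 h
  have := tL_pow_card_injective h1
  omega

lemma ell_pow (m j : ℕ) : ell F m ^ Fintype.card F ^ j = ∏ i ∈ Finset.range m,
    (tL F ^ Fintype.card F ^ j - tL F ^ Fintype.card F ^ (i + 1 + j)) := by
  have h : ∀ x : LaurentSeries F,
      (FiniteField.frobeniusAlgHom F (LaurentSeries F) ^ j) x = x ^ Fintype.card F ^ j := by
    intro x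
    rw [AlgHom.coe_pow, FiniteField.coe_frobeniusAlgHom, pow_iterate]
  rw [← h, ell, map_prod]
  refine Finset.prod_congr rfl fun i _ => ?_
  rw [map_sub, h, h, ← pow_mul, ← pow_add]

lemma ell_add (j m : ℕ) : ell F (j + m) = ell F j * ∏ i ∈ Finset.range m,
    (tL F - tL F ^ Fintype.card F ^ (i + 1 + j)) := by
  rw [ell, Finset.prod_range_add, ← ell]
  congr 1
  refine Finset.prod_congr rfl fun i _ => ?_
  rw [show j + i + 1 = i + 1 + j by ring]

end Laurent

/-- S_{<d}(q^j - 1) = ℓ_{d+j-1}/(ℓ_j ℓ_{d-1}^{q^j}). -/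
theorem Slt_qj_sub_one (F : Type) [Field F] [Fintype F] (q : ℕ) (hq : q = Fintype.card F)
    (j d : ℕ) (hj : 1 ≤ j) (hd : 1 ≤ d) :
    Slt F d (q ^ j - 1) = ell F (d + j - 1) / (ell F j * ell F (d - 1) ^ q ^ j) := by
  subst hq
  have hQ : 1 < Fintype.card F ^ j := Nat.one_lt_pow (by omega) Fintype.one_lt_card
  have hs : ∀ a : F, a ≠ 0 → a ^ (Fintype.card F ^ j - 1) = 1 := by
    intro a ha
    apply mul_right_cancel₀ ha
    rw [← pow_succ, Nat.sub_add_cancel hQ.le, FiniteField.pow_card_pow, one_mul]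
  have h1 := sum_inv_pow_eq_neg_Slt d _ (by omega) hs
  rw [sum_inv_pow_eq _ tL_pow_card_injective lin_tL_eq_zero hj hd, neg_inj] at h1
  obtain ⟨m, rfl⟩ := Nat.exists_eq_add_of_le' hd
  rw [← h1, eval_basis_zero, show m + 1 + j - 1 = j + m by omega, Nat.add_sub_cancel, ell_add,
    ell_pow, mul_div_mul_left _ _ (ell_ne_zero j)]
end

section
/- For all positive integers n and k, the classical (real) multiple zeta value ζ(2n, 2n, ..., 2n) (the entry 2n repeated k times) is a rational multiple of π^{2nk}. -/
/-!
Put `x i = i ^ (-2n)` (so `x 0 = 0`). A strictly decreasing `k`-tuple of positive integers is the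
same as a `k`-element set of positive integers, and sets containing `0` contribute nothing, so the
multiple zeta value is the `k`-th elementary symmetric function `e_k` of the summable family `x`.
Newton's identities for the finite subfamilies of `x` (`newton_finset`) pass to the limit over
finite subsets of `ℕ` (`newton_tsum`) and express `k * e_k` as an integral combination of the
products `e_i * p_j` with `i + j = k` and `j > 0`, where the power sum `p_j` is `ζ(2nj)`. By Euler
`p_j ∈ ℚ π^{2nj}`, so `e_k ∈ ℚ π^{2nk}` by strong induction on `k`.
-/

open Polynomial Finset

open Filter Topology

/-- The `k`-th elementary symmetric function of an infinite family of reals: the sum over all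
`k`-element index sets, encoded as a sum over all finite sets with the other terms set to `0`. -/
noncomputable def esymmTsum (x : ℕ → ℝ) (k : ℕ) : ℝ :=
  ∑' s : Finset ℕ, if s.card = k then ∏ i ∈ s, x i else 0

lemma tendsto_esymmTsum {x : ℕ → ℝ} (hx : ∀ i, 0 ≤ x i) (hs : Summable x) (k : ℕ) :
    Tendsto (fun s : Finset ℕ => ∑ t ∈ s.powersetCard k, ∏ i ∈ t, x i) atTop
      (𝓝 (esymmTsum x k)) := by
  have h1 : Summable fun s : Finset ℕ => if s.card = k then ∏ i ∈ s, x i else 0 := by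
    refine Summable.of_nonneg_of_le (fun s => ?_) (fun s => ?_)
      (summable_finsetProd_of_summable_nonneg hx hs)
    · split_ifs
      · exact prod_nonneg fun i _ => hx i
      · exact le_rfl
    · split_ifs
      · exact le_rfl
      · exact prod_nonneg fun i _ => hx i
  refine (h1.hasSum.comp tendsto_finset_powerset_atTop_atTop).congr fun s => ?_
  simp only [Function.comp_apply, powersetCard_eq_filter, sum_filter]

/-- Newton's identities for the values `x i`, `i ∈ s`. -/
lemma newton_finset (x : ℕ → ℝ) (s : Finset ℕ) (k : ℕ) :
    k * ∑ t ∈ s.powersetCard k, ∏ i ∈ t, x i = (-1) ^ (k + 1) *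
      ∑ a ∈ antidiagonal k with a.1 < k,
        (-1) ^ a.1 * (∑ t ∈ s.powersetCard a.1, ∏ i ∈ t, x i) * ∑ i ∈ s, x i ^ a.2 := by
  have h := congrArg (MvPolynomial.aeval fun i : s => x i) (MvPolynomial.mul_esymm_eq_sum s ℝ k)
  have e (j : ℕ) : MvPolynomial.aeval (fun i : s => x i) (MvPolynomial.esymm s ℝ j)
      = ∑ t ∈ s.powersetCard j, ∏ i ∈ t, x i := by
    rw [MvPolynomial.aeval_esymm_eq_multiset_esymm, ← Finset.esymm_map_val]
    congr 1
    exact Multiset.attach_map_val' s.val x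
  have p (j : ℕ) : MvPolynomial.aeval (fun i : s => x i) (MvPolynomial.psum s ℝ j)
      = ∑ i ∈ s, x i ^ j := by
    simp only [MvPolynomial.psum, map_sum, map_pow, MvPolynomial.aeval_X]
    exact Finset.sum_coe_sort s fun i => x i ^ j
  simpa only [map_mul, map_sum, map_pow, map_neg, map_one, map_natCast, e, p] using h

/-- Newton's identities for an infinite family, the power sums being given as limits `p j`. -/
lemma newton_tsum {x : ℕ → ℝ} (hx : ∀ i, 0 ≤ x i) (hs : Summable x) {p : ℕ → ℝ}
    (hp : ∀ j, 0 < j → HasSum (fun i => x i ^ j) (p j)) (k : ℕ) :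
    k * esymmTsum x k = (-1) ^ (k + 1) *
      ∑ a ∈ antidiagonal k with a.1 < k, (-1) ^ a.1 * esymmTsum x a.1 * p a.2 := by
  refine tendsto_nhds_unique ((tendsto_esymmTsum hx hs k).const_mul (k : ℝ)) ?_
  simp only [newton_finset x _ k]
  refine (tendsto_finsetSum _ fun a ha => ?_).const_mul _
  simp only [mem_filter, HasAntidiagonal.mem_antidiagonal] at ha
  exact ((tendsto_esymmTsum hx hs a.1).const_mul _).mul (hp a.2 (by omega))

/-- If the `j`-th power sum lies in `ℚ c^j` for all `j > 0`, then `e_k` lies in `ℚ c^k`. -/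
lemma esymmTsum_rational {x : ℕ → ℝ} (hx : ∀ i, 0 ≤ x i) (hs : Summable x) {c : ℝ} {q : ℕ → ℚ}
    (hq : ∀ j, 0 < j → HasSum (fun i => x i ^ j) (q j * c ^ j)) (k : ℕ) :
    ∃ r : ℚ, esymmTsum x k = r * c ^ k := by
  induction k using Nat.strong_induction_on with
  | _ k ih =>
    rcases Nat.eq_zero_or_pos k with rfl | hk
    · refine ⟨1, ?_⟩
      rw [esymmTsum, tsum_eq_single ∅ (by simp +contextual)]
      simp
    · choose! r hr using ih
      have h := newton_tsum hx hs hq k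
      have hk' : (k : ℝ) ≠ 0 := by positivity
      refine ⟨(-1) ^ (k + 1) *
        (∑ a ∈ antidiagonal k with a.1 < k, (-1) ^ a.1 * r a.1 * q a.2) / k, ?_⟩
      have h2 : ∑ a ∈ antidiagonal k with a.1 < k, (-1) ^ a.1 * esymmTsum x a.1 * (q a.2 * c ^ a.2)
          = (∑ a ∈ antidiagonal k with a.1 < k, (-1) ^ a.1 * (r a.1 : ℝ) * q a.2) * c ^ k := by
        rw [Finset.sum_mul]
        refine Finset.sum_congr rfl fun a ha => ?_
        simp only [mem_filter, HasAntidiagonal.mem_antidiagonal] at ha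
        rw [hr a.1 ha.2, ← ha.1, pow_add]
        ring
      rw [h2] at h
      push_cast
      field_simp
      linarith

/-- Strictly decreasing tuples of positive integers are parametrised by their sets of entries. -/
lemma tsum_strictAnti_eq_esymmTsum {x : ℕ → ℝ} (hx0 : x 0 = 0) (k : ℕ) :
    (∑' f : {g : Fin k → ℕ // StrictAnti g ∧ ∀ i, 1 ≤ g i}, ∏ i, x (f.1 i)) = esymmTsum x k := by
  set φ : {g : Fin k → ℕ // StrictAnti g ∧ ∀ i, 1 ≤ g i} → Finset ℕ := fun f => univ.image f.1
  have hφ : Function.Injective φ := by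
    intro f g h
    apply Subtype.ext
    rw [← f.2.1.range_inj g.2.1]
    simpa [φ] using congrArg (fun s : Finset ℕ => (s : Set ℕ)) h
  rw [esymmTsum, ← hφ.tsum_eq]
  · refine tsum_congr fun f => ?_
    have hc : (φ f).card = k := by
      simp [φ, card_image_of_injective _ f.2.1.injective]
    rw [if_pos hc, prod_image fun a _ b _ h => f.2.1.injective h]
  · intro s hs
    rw [Function.mem_support] at hs
    have hc : s.card = k := by
      by_contra h
      exact hs (if_neg h)
    rw [if_pos hc, prod_ne_zero_iff] at hs
    have hmono : StrictAnti fun i : Fin k => s.orderEmbOfFin hc i.rev := fun i j h =>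
      (s.orderEmbOfFin hc).strictMono (Fin.rev_lt_rev.2 h)
    refine ⟨⟨fun i => s.orderEmbOfFin hc i.rev, hmono, fun i => ?_⟩, ?_⟩
    · refine Nat.one_le_iff_ne_zero.2 fun h => hs _ (s.orderEmbOfFin_mem hc i.rev) ?_
      dsimp only at h
      rw [h, hx0]
    · rw [← Finset.coe_inj]
      simp only [φ, coe_image, coe_univ, Set.image_univ]
      rw [← s.range_orderEmbOfFin hc]
      exact Fin.rev_surjective.range_comp (s.orderEmbOfFin hc)

/-- The classical multiple zeta value ζ(2n, ..., 2n) (k repetitions) is a rational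
multiple of π^{2nk}. -/
theorem classical_mzv_repeated_even_eulerian (n k : ℕ) (hn : 0 < n) (hk : 0 < k) :
    ∃ r : ℚ, (∑' f : {g : Fin k → ℕ // StrictAnti g ∧ ∀ i, 1 ≤ g i},
        ∏ i, ((f.1 i : ℝ) ^ (2 * n))⁻¹) = (r : ℝ) * Real.pi ^ (2 * n * k) := by
  rw [tsum_strictAnti_eq_esymmTsum (x := fun i : ℕ => ((i : ℝ) ^ (2 * n))⁻¹)
    (by simp [hn.ne']) k, pow_mul]
  refine esymmTsum_rational (fun i => by positivity)
    (Real.summable_nat_pow_inv.2 (show 1 < 2 * n by omega))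
    (q := fun j => (-1) ^ (n * j + 1) * 2 ^ (2 * (n * j) - 1) *
      _root_.bernoulli (2 * (n * j)) / (2 * (n * j)).factorial) (fun j hj => ?_) k
  convert hasSum_zeta_nat (k := n * j) (by positivity) using 1
  · ext i
    rw [one_div, inv_pow, ← pow_mul, mul_assoc]
  · push_cast
    rw [← pow_mul, mul_assoc 2 n j]
    ring
end
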